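/- arXiv:2109.11813 — 5 statements merged into one kernel-verified Lean document; each statement's English description precedes it below -/
import Mathlib

section
/- For every shift t₁, t₂ ∈ {0, 1, …, L−1}, every triple of indices i₁, i₂, i₃ in {1, …, p} that are not all equal, and every j ∈ ℤ, one has x[j − ℓ_{i₁}] · x[j + t₁ − ℓ_{i₂}] · x[j + t₂ − ℓ_{i₃}] = 0. -/
/-!
If all three factors are nonzero, their arguments lie in the support window `[0, L - 1]`.
Comparing the first factor with each of the others, whose shift is also in `[0, L - 1]`, bounds
the difference of the two translations by `2L - 2` in absolute value; the separation condition
then makes the two indices equal, so all three coincide.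
-/

/-- **Separated occurrences do not correlate (third order).**
Under the separation condition `|ℓ_{i₁} - ℓ_{i₂}| ≥ 2L - 1`, for shifts
`t₁, t₂ ∈ {0, …, L-1}` and indices `i₁, i₂, i₃` that are not all equal,
`x[j - ℓ_{i₁}] ⬝ x[j + t₁ - ℓ_{i₂}] ⬝ x[j + t₂ - ℓ_{i₃}] = 0` for all `j`. -/
theorem separated_occurrences_third_order
    (L p : ℕ) (hL : 1 ≤ L) (hp : 1 ≤ p)
    (x : ℤ → ℝ) (hx : ∀ j : ℤ, j ∉ Set.Ico (0 : ℤ) (L : ℤ) → x j = 0)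
    (ℓ : Fin p → ℤ)
    (hsep : ∀ i₁ i₂ : Fin p, i₁ ≠ i₂ → 2 * (L : ℤ) - 1 ≤ |ℓ i₁ - ℓ i₂|)
    (t₁ t₂ : ℤ) (ht₁ : t₁ ∈ Set.Icc (0 : ℤ) ((L : ℤ) - 1)) (ht₂ : t₂ ∈ Set.Icc (0 : ℤ) ((L : ℤ) - 1))
    (i₁ i₂ i₃ : Fin p) (hne : ¬(i₁ = i₂ ∧ i₂ = i₃)) (j : ℤ) :
    x (j - ℓ i₁) * x (j + t₁ - ℓ i₂) * x (j + t₂ - ℓ i₃) = 0 := by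
  by_contra hprod
  have hsupp : ∀ m : ℤ, x m ≠ 0 → 0 ≤ m ∧ m < L := fun m hm =>
    Set.mem_Ico.mp (by_contra fun h => hm (hx m h))
  -- Two factors at relative shift `t ∈ [0, L - 1]` can both be nonzero only if
  -- `ℓ i₁ - ℓ i ∈ [-(2L - 2), L - 1]`, so separation forces `i₁ = i`.
  have key : ∀ (i : Fin p) (t : ℤ), t ∈ Set.Icc (0 : ℤ) ((L : ℤ) - 1) →
      x (j - ℓ i₁) ≠ 0 → x (j + t - ℓ i) ≠ 0 → i₁ = i := by
    intro i t ht h₁ h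
    by_contra hi
    have hs := hsep i₁ i hi
    obtain ⟨ht0, htL⟩ := ht
    have ha := hsupp _ h₁
    have hb := hsupp _ h
    rcases le_abs.mp hs with h' | h' <;> omega
  have h₁₂ := left_ne_zero_of_mul hprod
  have h₂ := key i₂ t₁ ht₁ (left_ne_zero_of_mul h₁₂) (right_ne_zero_of_mul h₁₂)
  have h₃ := key i₃ t₂ ht₂ (left_ne_zero_of_mul h₁₂) (right_ne_zero_of_mul hprod)
  exact hne ⟨h₂, h₂.symm.trans h₃⟩
end

section
/- For every shift ℓ ∈ {0, 1, …, L−1}, the second-order autocorrelation of the clean signal equals p times that of the target signal: Σ_{j∈ℤ} s[j] · s[j+ℓ] = p · Σ_{j∈ℤ} x[j] · x[j+ℓ] (both sums have finitely many nonzero terms). -/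
/-!
Expand `s j * s (j + t)` into a double sum over pairs of translates. A cross term
`x (j - ℓ i) * x (j + t - ℓ k)` with `i ≠ k` can be nonzero only if
`|ℓ i - ℓ k| ≤ (L - 1) + t ≤ 2 * L - 2`, which the separation condition excludes. So only the
`p` diagonal terms remain, and each is a translate of `x j * x (j + t)`, with the same sum over `ℤ`.
-/

/-- **Second-order autocorrelation of the clean signal.**
Under the separation condition, for shifts `t ∈ {0, …, L-1}`, the second-order
autocorrelation of `s[j] = ∑_i x[j - ℓ_i]` equals `p` times that of `x`. -/
theorem clean_signal_second_autocorrelation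
    (L p : ℕ) (hL : 1 ≤ L) (hp : 1 ≤ p)
    (x : ℤ → ℝ) (hx : ∀ j : ℤ, j ∉ Set.Ico (0 : ℤ) (L : ℤ) → x j = 0)
    (ℓ : Fin p → ℤ)
    (hsep : ∀ i₁ i₂ : Fin p, i₁ ≠ i₂ → 2 * (L : ℤ) - 1 ≤ |ℓ i₁ - ℓ i₂|)
    (s : ℤ → ℝ) (hs : ∀ j : ℤ, s j = ∑ i : Fin p, x (j - ℓ i))
    (t : ℤ) (ht : t ∈ Set.Icc (0 : ℤ) ((L : ℤ) - 1)) :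
    ∑ᶠ j : ℤ, s j * s (j + t) = (p : ℝ) * ∑ᶠ j : ℤ, x j * x (j + t) := by
  obtain ⟨ht0, ht1⟩ := ht
  have hcross : ∀ (j : ℤ) (i k : Fin p), k ≠ i → x (j - ℓ i) * x (j + t - ℓ k) = 0 := by
    intro j i k hki
    by_contra hne
    have h1 : j - ℓ i ∈ Set.Ico (0 : ℤ) L := by
      by_contra h
      exact hne (by rw [hx _ h, zero_mul])
    have h2 : j + t - ℓ k ∈ Set.Ico (0 : ℤ) L := by
      by_contra h
      exact hne (by rw [hx _ h, mul_zero])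
    obtain ⟨h1a, h1b⟩ := h1
    obtain ⟨h2a, h2b⟩ := h2
    rcases le_abs.mp (hsep k i hki) with h | h <;> omega
  have hdiag : ∀ j : ℤ, s j * s (j + t) = ∑ i : Fin p, x (j - ℓ i) * x (j - ℓ i + t) := by
    intro j
    rw [hs, hs, Finset.sum_mul_sum]
    refine Finset.sum_congr rfl fun i _ => ?_
    rw [Finset.sum_eq_single i (fun k _ hk => hcross j i k hk) (by simp), add_sub_right_comm]
  -- Each diagonal term is supported in a bounded interval, so the sums may be interchanged.
  have hfin : ∀ i : Fin p,
      (Function.support fun j : ℤ => x (j - ℓ i) * x (j - ℓ i + t)).Finite := by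
    intro i
    refine (Set.finite_Ico (ℓ i) (ℓ i + L)).subset fun j hj => ?_
    by_contra h
    refine hj ?_
    have hz : x (j - ℓ i) = 0 := hx _ fun hm => h ⟨by linarith [hm.1], by linarith [hm.2]⟩
    simp [hz]
  have hshift : ∀ i : Fin p,
      ∑ᶠ j : ℤ, x (j - ℓ i) * x (j - ℓ i + t) = ∑ᶠ j : ℤ, x j * x (j + t) := fun i =>
    finsum_comp_equiv (Equiv.subRight (ℓ i)) (f := fun j : ℤ => x j * x (j + t))
  rw [finsum_congr hdiag, finsum_sum_comm _ _ fun i _ => hfin i]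
  simp [hshift]
end

section
/- For all shifts ℓ₁, ℓ₂ ∈ {0, 1, …, L−1}, the third-order autocorrelation of the clean signal equals p times that of the target signal: Σ_{j∈ℤ} s[j] · s[j+ℓ₁] · s[j+ℓ₂] = p · Σ_{j∈ℤ} x[j] · x[j+ℓ₁] · x[j+ℓ₂] (both sums have finitely many nonzero terms). -/
/-!
If `x (j - ℓ i)` and `x (j + t - ℓ k)` are both nonzero with `0 ≤ t ≤ L - 1`, then
`|ℓ i - ℓ k| ≤ 2L - 2`, so separation forces `i = k`. Hence next to a factor `x (j - ℓ i)`, the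
factor `s (j + t)` may be replaced by its `i`-th summand (`mul_shifted_signal`). Applied to both
shifts, this removes all cross terms from the triple product, which becomes a sum of `p` translates
of the triple product of `x`; each translate has the same sum over `ℤ`.
-/

lemma mul_shifted_signal
    {L p : ℕ} {x : ℤ → ℝ} (hx : ∀ j : ℤ, j ∉ Set.Ico (0 : ℤ) (L : ℤ) → x j = 0)
    {ℓ : Fin p → ℤ}
    (hsep : ∀ i₁ i₂ : Fin p, i₁ ≠ i₂ → 2 * (L : ℤ) - 1 ≤ |ℓ i₁ - ℓ i₂|)
    {s : ℤ → ℝ} (hs : ∀ j : ℤ, s j = ∑ i : Fin p, x (j - ℓ i))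
    {t : ℤ} (ht : t ∈ Set.Icc (0 : ℤ) ((L : ℤ) - 1)) (j : ℤ) (i : Fin p) :
    x (j - ℓ i) * s (j + t) = x (j - ℓ i) * x (j - ℓ i + t) := by
  by_cases h : j - ℓ i ∈ Set.Ico (0 : ℤ) (L : ℤ)
  · rw [hs, Finset.sum_eq_single i]
    · rw [sub_add_eq_add_sub]
    · intro k _ hk
      apply hx
      intro h'
      have hik := hsep k i hk
      simp only [Set.mem_Ico, Set.mem_Icc] at h h' ht
      rcases le_abs.mp hik with h₁ | h₁ <;> omega
    · simp
  · rw [hx _ h, zero_mul, zero_mul]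

/-- **Third-order autocorrelation of the clean signal.**
Under the separation condition, for shifts `t₁, t₂ ∈ {0, …, L-1}`, the third-order
autocorrelation of `s[j] = ∑_i x[j - ℓ_i]` equals `p` times that of `x`. -/
theorem clean_signal_third_autocorrelation
    (L p : ℕ) (hL : 1 ≤ L) (hp : 1 ≤ p)
    (x : ℤ → ℝ) (hx : ∀ j : ℤ, j ∉ Set.Ico (0 : ℤ) (L : ℤ) → x j = 0)
    (ℓ : Fin p → ℤ)
    (hsep : ∀ i₁ i₂ : Fin p, i₁ ≠ i₂ → 2 * (L : ℤ) - 1 ≤ |ℓ i₁ - ℓ i₂|)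
    (s : ℤ → ℝ) (hs : ∀ j : ℤ, s j = ∑ i : Fin p, x (j - ℓ i))
    (t₁ t₂ : ℤ) (ht₁ : t₁ ∈ Set.Icc (0 : ℤ) ((L : ℤ) - 1)) (ht₂ : t₂ ∈ Set.Icc (0 : ℤ) ((L : ℤ) - 1)) :
    ∑ᶠ j : ℤ, s j * s (j + t₁) * s (j + t₂) = (p : ℝ) * ∑ᶠ j : ℤ, x j * x (j + t₁) * x (j + t₂) := by
  have key : ∀ j : ℤ, s j * s (j + t₁) * s (j + t₂) =
      ∑ i : Fin p, x (j - ℓ i) * x (j - ℓ i + t₁) * x (j - ℓ i + t₂) := by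
    intro j
    rw [hs j, Finset.sum_mul, Finset.sum_mul]
    refine Finset.sum_congr rfl fun i _ => ?_
    rw [mul_shifted_signal hx hsep hs ht₁, mul_right_comm, mul_shifted_signal hx hsep hs ht₂,
      mul_right_comm]
  simp_rw [key]
  rw [finsum_sum_comm]
  · have hshift : ∀ i : Fin p, ∑ᶠ j : ℤ, x (j - ℓ i) * x (j - ℓ i + t₁) * x (j - ℓ i + t₂) =
        ∑ᶠ j : ℤ, x j * x (j + t₁) * x (j + t₂) := fun i =>
      finsum_comp_equiv (Equiv.subRight (ℓ i)) (f := fun j => x j * x (j + t₁) * x (j + t₂))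
    simp [hshift]
  · intro i _
    refine (Set.finite_Ico (ℓ i) (ℓ i + L)).subset fun j hj => ?_
    by_contra hj'
    refine hj ?_
    have h0 : x (j - ℓ i) = 0 := by
      apply hx
      simp only [Set.mem_Ico] at hj' ⊢
      omega
    simp [h0]
end

section
/- Consistency of the generalized method of moments estimator: let Θ be a compact metric space, m ≥ 1 an integer, and θ₀ ∈ Θ. Let g : Θ → ℝ^m be continuous with g(θ) = 0 if and only if θ = θ₀. Let g_N : Θ → ℝ^m (N ∈ ℕ) be functions converging to g uniformly on Θ, and let W_N be symmetric positive semidefinite m×m real matrices converging (entrywise) to a symmetric positive definite matrix W. If θ̂_N ∈ Θ is any sequence of global minimizers of the weighted least-squares objective, i.e. g_N(θ̂_N)ᵀ W_N g_N(θ̂_N) ≤ g_N(θ)ᵀ W_N g_N(θ) for all θ ∈ Θ, then θ̂_N → θ₀ as N → ∞. -/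
open Filter Matrix

/-!
Convergence is tested along ultrafilters `u` on the index set finer than `atTop`. By compactness
`θhat` converges along `u` to some `θ'`. Uniform convergence and continuity of `g` give
`gN n (θhat n) → g θ'` along `u`, so the minimal objective values tend to `g θ' ⬝ᵥ (W *ᵥ g θ')`.
They are bounded by the objective values at `θ₀`, which tend to `0` because `g θ₀ = 0`. Positive
definiteness of `W` then forces `g θ' = 0`, that is, `θ' = θ₀`.
-/

/-- **Consistency of the GMM estimator.**
On a compact metric parameter space `Θ`, if the population moment `g` is continuous and
vanishes exactly at `θ₀`, the sample moments `gN` converge uniformly to `g`, and the PSD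
weighting matrices `WN` converge to a positive definite `W`, then any sequence of global
minimizers of the weighted least-squares objective converges to `θ₀`. -/
theorem gmm_consistency
    {Θ : Type*} [MetricSpace Θ] [CompactSpace Θ]
    (m : ℕ) (hm : 1 ≤ m) (θ₀ : Θ)
    (g : Θ → (Fin m → ℝ)) (hg_cont : Continuous g)
    (hg_zero : ∀ θ : Θ, g θ = 0 ↔ θ = θ₀)
    (gN : ℕ → Θ → (Fin m → ℝ))
    (hunif : TendstoUniformly gN g atTop)
    (WN : ℕ → Matrix (Fin m) (Fin m) ℝ)
    (hWN : ∀ n, (WN n).PosSemidef)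
    (W : Matrix (Fin m) (Fin m) ℝ) (hW : W.PosDef)
    (hWconv : ∀ i j : Fin m, Tendsto (fun n => WN n i j) atTop (nhds (W i j)))
    (θhat : ℕ → Θ)
    (hmin : ∀ (n : ℕ) (θ : Θ),
      gN n (θhat n) ⬝ᵥ (WN n *ᵥ gN n (θhat n)) ≤ gN n θ ⬝ᵥ (WN n *ᵥ gN n θ)) :
    Tendsto θhat atTop (nhds θ₀) := by
  rw [tendsto_iff_ultrafilter]
  intro u hu
  obtain ⟨θ', -, hθ'⟩ := isCompact_univ.ultrafilter_le_nhds (u.map θhat) (by simp)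
  have hlim : Tendsto θhat u (nhds θ') := hθ'
  have hunif_u : TendstoUniformly gN g u := fun s hs => hu (hunif s hs)
  have hW_u : Tendsto WN u (nhds W) :=
    tendsto_pi_nhds.2 fun i => tendsto_pi_nhds.2 fun j => (hWconv i j).mono_left hu
  have hobj : Continuous fun p : (Fin m → ℝ) × Matrix (Fin m) (Fin m) ℝ =>
      p.1 ⬝ᵥ (p.2 *ᵥ p.1) :=
    continuous_fst.dotProduct (continuous_snd.matrix_mulVec continuous_fst)
  have hval_hat : Tendsto (fun n => gN n (θhat n) ⬝ᵥ (WN n *ᵥ gN n (θhat n))) u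
      (nhds (g θ' ⬝ᵥ (W *ᵥ g θ'))) :=
    (hobj.tendsto (g θ', W)).comp
      ((hunif_u.tendsto_comp hg_cont.continuousAt hlim).prodMk_nhds hW_u)
  have hval_zero : Tendsto (fun n => gN n θ₀ ⬝ᵥ (WN n *ᵥ gN n θ₀)) u
      (nhds (g θ₀ ⬝ᵥ (W *ᵥ g θ₀))) :=
    (hobj.tendsto (g θ₀, W)).comp ((hunif_u.tendsto_at θ₀).prodMk_nhds hW_u)
  have hle : g θ' ⬝ᵥ (W *ᵥ g θ') ≤ 0 := by
    have h := le_of_tendsto_of_tendsto' hval_hat hval_zero fun n => hmin n θ₀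
    simpa [(hg_zero θ₀).2 rfl] using h
  have hzero : g θ' = 0 := by
    by_contra hne
    have hpos := hW.dotProduct_mulVec_pos hne
    rw [star_trivial] at hpos
    exact absurd hle (not_le.2 hpos)
  rwa [(hg_zero θ').1 hzero] at hlim
end

section
/- Optimal choice of the GMM weighting matrix (lower bound): let m ≥ k ≥ 1 be integers, let S be a symmetric positive definite m×m real matrix, let G be an m×k real matrix of rank k, and let W be a symmetric positive definite m×m real matrix. Then the k×k matrices GᵀWG and GᵀS⁻¹G are invertible, and with M = (GᵀWG)⁻¹GᵀW, the asymptotic covariance M S Mᵀ dominates the optimal one: M S Mᵀ − (GᵀS⁻¹G)⁻¹ is positive semidefinite. -/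
/-!
The matrix `M = (GᵀWG)⁻¹GᵀW` is a left inverse of `G`, and so is the optimal
`M₀ = V GᵀS⁻¹` with `V = (GᵀS⁻¹G)⁻¹`. For any left inverse `M` the cross terms in
`(M - M₀) S (M - M₀)ᵀ` all collapse to `V`, so this positive semidefinite matrix equals
`M S Mᵀ - V`. Both Gram matrices are positive definite, hence invertible, because `G` has
trivial kernel.
-/

open Matrix

/-- The Gauss–Markov identity: every left inverse `M` of `G` satisfies
`M S Mᵀ - V = (M - M₀) S (M - M₀)ᵀ` with `V = (GᵀS⁻¹G)⁻¹` and `M₀ = V GᵀS⁻¹`. -/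
lemma sub_inv_eq_of_left_inverse {m k : ℕ}
    {S : Matrix (Fin m) (Fin m) ℝ} (hSu : IsUnit S) (hSt : Sᵀ = S)
    {G : Matrix (Fin m) (Fin k) ℝ} (hB : IsUnit (Gᵀ * S⁻¹ * G))
    {M : Matrix (Fin k) (Fin m) ℝ} (hM : M * G = 1) :
    M * S * Mᵀ - (Gᵀ * S⁻¹ * G)⁻¹ =
      (M - (Gᵀ * S⁻¹ * G)⁻¹ * Gᵀ * S⁻¹) * S * (M - (Gᵀ * S⁻¹ * G)⁻¹ * Gᵀ * S⁻¹)ᵀ := by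
  have hSd := (Matrix.isUnit_iff_isUnit_det S).1 hSu
  have hBd := (Matrix.isUnit_iff_isUnit_det _).1 hB
  have hBt : (Gᵀ * S⁻¹ * G)ᵀ = Gᵀ * S⁻¹ * G := by
    simp [Matrix.transpose_mul, Matrix.transpose_nonsing_inv, hSt, Matrix.mul_assoc]
  have hVB := Matrix.nonsing_inv_mul _ hBd
  have hVt : ((Gᵀ * S⁻¹ * G)⁻¹)ᵀ = (Gᵀ * S⁻¹ * G)⁻¹ := by
    rw [Matrix.transpose_nonsing_inv, hBt]
  set V := (Gᵀ * S⁻¹ * G)⁻¹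
  have hMt : Gᵀ * Mᵀ = 1 := by rw [← Matrix.transpose_mul, hM, Matrix.transpose_one]
  have hLS : (M - V * Gᵀ * S⁻¹) * S = M * S - V * Gᵀ := by
    rw [Matrix.sub_mul, Matrix.mul_assoc (V * Gᵀ), Matrix.nonsing_inv_mul _ hSd, Matrix.mul_one]
  have hLt : (M - V * Gᵀ * S⁻¹)ᵀ = Mᵀ - S⁻¹ * G * V := by
    simp [Matrix.transpose_mul, Matrix.transpose_nonsing_inv, hSt, hVt, Matrix.mul_assoc]
  have h1 : M * S * (S⁻¹ * G * V) = V := by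
    rw [Matrix.mul_assoc M, Matrix.mul_assoc S⁻¹, ← Matrix.mul_assoc S,
      Matrix.mul_nonsing_inv _ hSd, Matrix.one_mul, ← Matrix.mul_assoc, hM, Matrix.one_mul]
  have h2 : V * Gᵀ * Mᵀ = V := by rw [Matrix.mul_assoc, hMt, Matrix.mul_one]
  have h3 : V * Gᵀ * (S⁻¹ * G * V) = V := by
    calc V * Gᵀ * (S⁻¹ * G * V) = V * (Gᵀ * S⁻¹ * G) * V := by simp only [Matrix.mul_assoc]
      _ = V := by rw [hVB, Matrix.one_mul]
  rw [hLS, hLt, Matrix.sub_mul, Matrix.mul_sub, Matrix.mul_sub, h1, h2, h3, sub_self, sub_zero]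

/-- **Optimal choice of the GMM weighting matrix (lower bound).**
For a positive definite `m×m` matrix `S`, a full-column-rank `m×k` matrix `G`, and a
positive definite weighting matrix `W`, the matrices `GᵀWG` and `GᵀS⁻¹G` are invertible,
and with `M = (GᵀWG)⁻¹GᵀW`, the difference `M S Mᵀ - (GᵀS⁻¹G)⁻¹` is positive
semidefinite. -/
theorem gmm_weighting_lower_bound
    (m k : ℕ) (hk : 1 ≤ k) (hmk : k ≤ m)
    (S : Matrix (Fin m) (Fin m) ℝ) (hS : S.PosDef)
    (G : Matrix (Fin m) (Fin k) ℝ) (hG : G.rank = k)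
    (W : Matrix (Fin m) (Fin m) ℝ) (hW : W.PosDef) :
    IsUnit (Gᵀ * W * G) ∧ IsUnit (Gᵀ * S⁻¹ * G) ∧
      ((Gᵀ * W * G)⁻¹ * Gᵀ * W * S * ((Gᵀ * W * G)⁻¹ * Gᵀ * W)ᵀ
          - (Gᵀ * S⁻¹ * G)⁻¹).PosSemidef := by
  have hinj : Function.Injective G.mulVec := by
    rw [Matrix.mulVec_injective_iff, linearIndependent_iff_card_eq_finrank_span,
      Set.finrank, ← Matrix.rank_eq_finrank_span_cols, hG, Fintype.card_fin]
  have hA : IsUnit (Gᵀ * W * G) := by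
    simpa using (hW.conjTranspose_mul_mul_same hinj).isUnit
  have hB : IsUnit (Gᵀ * S⁻¹ * G) := by
    simpa using (hS.inv.conjTranspose_mul_mul_same hinj).isUnit
  refine ⟨hA, hB, ?_⟩
  have hM : (Gᵀ * W * G)⁻¹ * Gᵀ * W * G = 1 := by
    have h := Matrix.nonsing_inv_mul _ ((Matrix.isUnit_iff_isUnit_det _).1 hA)
    simpa only [Matrix.mul_assoc] using h
  rw [sub_inv_eq_of_left_inverse hS.isUnit (by simpa using hS.isHermitian.eq) hB hM]
  simpa using hS.posSemidef.mul_mul_conjTranspose_same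
    ((Gᵀ * W * G)⁻¹ * Gᵀ * W - (Gᵀ * S⁻¹ * G)⁻¹ * Gᵀ * S⁻¹)
end
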